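/- arXiv:1909.13100 — 13 statements merged into one kernel-verified Lean document; each statement's English description precedes it below -/
import Mathlib

section
/- P(𝒮, 𝒳) = {((x_α)_{α∈Γ}, (y_α)_{α∈Γ}) ∈ 𝒳 × 𝒳 : there exists β ∈ Γ with x_β = y_β}. That is, a pair of points of X^Γ is proximal under the semigroup of all generalized shifts if and only if the two points agree at at least one coordinate. -/
open Set Topology

/-- The proximal relation of a semigroup `S` of self-maps of a space `Z`:
`(x, y)` is proximal iff the closure of `{(s x, s y) : s ∈ S}` meets the diagonal. -/
def proxRel {Z : Type*} [TopologicalSpace Z] (S : Set (Z → Z)) : Set (Z × Z) :=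
  {p | ∃ z : Z, (z, z) ∈ closure {q : Z × Z | ∃ s ∈ S, q = (s p.1, s p.2)}}

/-- The regionally proximal relation of a semigroup `S` of self-maps of a space `Z`:
`(x, y)` is regionally proximal iff there are nets `x_λ → x`, `y_λ → y` and `s_λ` in `S`
with `lim s_λ x_λ = lim s_λ y_λ`; equivalently, there is `z` such that `((x, y), (z, z))`
lies in the closure of `{((a, b), (s a, s b)) : s ∈ S, a b ∈ Z}`. -/
def regProxRel {Z : Type*} [TopologicalSpace Z] (S : Set (Z → Z)) : Set (Z × Z) :=
  {p | ∃ z : Z, (p, (z, z)) ∈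
    closure {q : (Z × Z) × Z × Z | ∃ s ∈ S, ∃ a b : Z, q = ((a, b), (s a, s b))}}

/-- The syndetically proximal relation of a group `T` of homeomorphisms of `Z`:
`(x, y)` is syndetically proximal iff the closure of the orbit `{(t x, t y) : t ∈ T}`
is contained in the proximal relation. -/
def synProxRel {Z : Type*} [TopologicalSpace Z] (T : Set (Z → Z)) : Set (Z × Z) :=
  {p | closure {q : Z × Z | ∃ t ∈ T, q = (t p.1, t p.2)} ⊆ proxRel T}

/-- `𝒮`: the semigroup of all generalized shifts `σ_φ (x) = x ∘ φ` on `X ^ Γ`. -/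
def shiftSemigroup (X Γ : Type*) : Set ((Γ → X) → (Γ → X)) :=
  {f | ∃ φ : Γ → Γ, f = fun x => x ∘ φ}

/-- `ℋ`: the group of generalized shift homeomorphisms `σ_φ` with `φ` bijective. -/
def shiftGroup (X Γ : Type*) : Set ((Γ → X) → (Γ → X)) :=
  {f | ∃ φ : Γ → Γ, Function.Bijective φ ∧ f = fun x => x ∘ φ}

/-- `P(𝒮, 𝒳)` is the set of pairs agreeing at at least one coordinate. -/
theorem proxRel_shiftSemigroup_eq (X Γ : Type*) [TopologicalSpace X] [DiscreteTopology X]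
    [Finite X] [Nontrivial X] [Nonempty Γ] :
    proxRel (shiftSemigroup X Γ) =
      {p : (Γ → X) × (Γ → X) | ∃ β : Γ, p.1 β = p.2 β} := by
  ext ⟨x, y⟩
  constructor
  · rintro ⟨z, hz⟩
    obtain ⟨γ⟩ := ‹Nonempty Γ›
    -- As `X` is discrete, agreement at the coordinate `γ` is an open condition on pairs, so some
    -- `(x ∘ φ, y ∘ φ)` near `(z, z)` satisfies it; then `x` and `y` agree at `φ γ`.
    have hopen : IsOpen {q : (Γ → X) × (Γ → X) | q.1 γ = q.2 γ} :=
      (isOpen_discrete {r : X × X | r.1 = r.2}).preimage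
        (f := fun q : (Γ → X) × (Γ → X) => (q.1 γ, q.2 γ)) (by fun_prop)
    obtain ⟨_, hq, _, ⟨φ, rfl⟩, rfl⟩ := mem_closure_iff.mp hz _ hopen rfl
    exact ⟨φ γ, hq⟩
  · rintro ⟨β, hβ⟩
    -- The shift along the constant map `φ = β` sends `x` and `y` to the same constant point.
    refine ⟨fun _ => x β, subset_closure ⟨_, ⟨fun _ => β, rfl⟩, ?_⟩⟩
    exact Prod.ext rfl (funext fun _ => hβ)
end

section
/- If Γ is infinite, then Q(ℋ, 𝒳) = 𝒳 × 𝒳 and consequently Q(𝒮, 𝒳) = 𝒳 × 𝒳; that is, every pair of points of X^Γ is regionally proximal both for the group of generalized shift homeomorphisms and for the semigroup of all generalized shifts. -/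
/-!
For a finite set `F ⊆ Γ`, infinitude of `Γ` gives a bijection `φ` of `Γ` with `φ(F) ∩ F = ∅`
(`exists_bijective_forall_notMem`). Fix `c : X` and let `a_F`, `b_F` agree with `x`, `y` on `F` and
be constantly `c` off `F`. Then `a_F ∘ φ` and `b_F ∘ φ` equal `c` on `F`. Along the directed set of
finite subsets `F` we get `a_F → x`, `b_F → y`, while both images tend to the constant point `c`.
So every pair is regionally proximal for `ℋ`, hence also for the larger `𝒮`.
-/


open Set Topology

/-- A translation by an element outside `F - F`, for any group structure on `Γ`, moves `F` off
itself. The group structure is taken from a field structure, which every infinite type carries. -/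
lemma exists_bijective_forall_notMem {Γ : Type*} [Infinite Γ] (F : Finset Γ) :
    ∃ φ : Γ → Γ, Function.Bijective φ ∧ ∀ i ∈ F, φ i ∉ F := by
  classical
  obtain ⟨inst⟩ := Infinite.nonempty_field (α := Γ)
  obtain ⟨g, hg⟩ := Infinite.exists_notMem_finset (Finset.image₂ (fun a b => a - b) F F)
  refine ⟨fun i => g + i, (Equiv.addLeft g).bijective, fun i hi h => hg ?_⟩
  exact Finset.mem_image₂.2 ⟨g + i, h, i, hi, add_sub_cancel_right g i⟩

lemma tendsto_pi_of_eqOn_finset {X Γ : Type*} [TopologicalSpace X] {u : Finset Γ → Γ → X}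
    {x : Γ → X} (h : ∀ F, ∀ i ∈ F, u F i = x i) : Filter.Tendsto u Filter.atTop (𝓝 x) := by
  refine tendsto_pi_nhds.2 fun i => tendsto_const_nhds.congr' ?_
  filter_upwards [Filter.eventually_ge_atTop {i}] with F hF
  exact (h F i (hF (Finset.mem_singleton_self i))).symm

lemma regProxRel_mono {Z : Type*} [TopologicalSpace Z] {S T : Set (Z → Z)} (h : S ⊆ T) :
    regProxRel S ⊆ regProxRel T := by
  rintro p ⟨z, hz⟩
  refine ⟨z, closure_mono ?_ hz⟩
  rintro q ⟨s, hs, hq⟩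
  exact ⟨s, h hs, hq⟩

lemma shiftGroup_subset_shiftSemigroup (X Γ : Type*) : shiftGroup X Γ ⊆ shiftSemigroup X Γ := by
  rintro f ⟨φ, -, rfl⟩
  exact ⟨φ, rfl⟩

lemma regProxRel_shiftGroup (X Γ : Type*) [TopologicalSpace X] [Nonempty X] [Infinite Γ] :
    regProxRel (shiftGroup X Γ) = Set.univ := by
  classical
  refine Set.eq_univ_of_forall fun ⟨x, y⟩ => ?_
  obtain ⟨c⟩ := ‹Nonempty X›
  choose φ hφ hF using exists_bijective_forall_notMem (Γ := Γ)
  let trunc (w : Γ → X) (F : Finset Γ) : Γ → X := fun i => if i ∈ F then w i else c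
  have h1 (w : Γ → X) : Filter.Tendsto (trunc w) Filter.atTop (𝓝 w) :=
    tendsto_pi_of_eqOn_finset fun F i hi => if_pos hi
  have h2 (w : Γ → X) :
      Filter.Tendsto (fun F => trunc w F ∘ φ F) Filter.atTop (𝓝 fun _ => c) :=
    tendsto_pi_of_eqOn_finset fun F i hi => if_neg (hF F i hi)
  refine ⟨fun _ => c, mem_closure_of_tendsto
    (((h1 x).prodMk_nhds (h1 y)).prodMk_nhds ((h2 x).prodMk_nhds (h2 y)))
    (Filter.Eventually.of_forall fun F => ?_)⟩
  exact ⟨fun w => w ∘ φ F, ⟨φ F, hφ F, rfl⟩, trunc x F, trunc y F, rfl⟩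

/-- for infinite `Γ`, `Q(ℋ, 𝒳) = 𝒳 × 𝒳` and `Q(𝒮, 𝒳) = 𝒳 × 𝒳`. -/
theorem regProxRel_eq_univ_of_infinite (X Γ : Type*) [TopologicalSpace X] [DiscreteTopology X]
    [Finite X] [Nontrivial X] [Nonempty Γ] [Infinite Γ] :
    regProxRel (shiftGroup X Γ) = Set.univ ∧
      regProxRel (shiftSemigroup X Γ) = Set.univ := by
  have h := regProxRel_shiftGroup X Γ
  exact ⟨h, Set.eq_univ_of_univ_subset
    (h.symm.subset.trans (regProxRel_mono (shiftGroup_subset_shiftSemigroup X Γ)))⟩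
end

section
/- Q(𝒮, 𝒳) equals 𝒳 × 𝒳 if Γ is infinite, and equals P(𝒮, 𝒳) if Γ is finite; that is, the regionally proximal relation of the semigroup of all generalized shifts is the full relation for infinite Γ and coincides with the proximal relation for finite Γ. -/
/-! For infinite `Γ`, replace `x` and `y` outside a finite set `I` of coordinates by a fixed
letter `c`: the results converge to `x` and `y` as `I` grows, and the generalized shift along a
constant map `Γ → Γ` with value outside `I` sends both to the constant sequence `c`.
For finite `Γ` the space `Γ → X` is discrete, so the closures in both definitions are trivial. -/

open Set Topology

/-- Truncations of `x` to finite sets of coordinates, filled up with `c`, converge to `x`. -/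
theorem tendsto_truncation {X Γ : Type*} [TopologicalSpace X] [DecidableEq Γ]
    (x : Γ → X) (c : X) :
    Filter.Tendsto (fun I : Finset Γ => I.piecewise x (fun _ => c)) Filter.atTop (𝓝 x) := by
  refine tendsto_pi_nhds.2 fun γ => tendsto_const_nhds.congr' ?_
  filter_upwards [Filter.eventually_ge_atTop {γ}] with I hI
  exact (Finset.piecewise_eq_of_mem _ _ _ (hI (Finset.mem_singleton_self γ))).symm

/-- `Q(𝒮, 𝒳)` is the full relation when `Γ` is infinite and equals `P(𝒮, 𝒳)`
when `Γ` is finite. -/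
theorem regProxRel_shiftSemigroup (X Γ : Type*) [TopologicalSpace X] [DiscreteTopology X]
    [Finite X] [Nontrivial X] [Nonempty Γ] :
    (Infinite Γ → regProxRel (shiftSemigroup X Γ) = Set.univ) ∧
      (Finite Γ → regProxRel (shiftSemigroup X Γ) = proxRel (shiftSemigroup X Γ)) := by
  classical
  refine ⟨fun _ => ?_, fun _ => ?_⟩
  · obtain ⟨c⟩ : Nonempty X := inferInstance
    refine Set.eq_univ_of_forall fun p => ⟨fun _ => c, ?_⟩
    refine mem_closure_of_tendsto
      (((tendsto_truncation p.1 c).prodMk_nhds (tendsto_truncation p.2 c)).prodMk_nhds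
        tendsto_const_nhds) (Filter.Eventually.of_forall fun I => ?_)
    obtain ⟨γ, hγ⟩ := Infinite.exists_notMem_finset I
    refine ⟨_, ⟨fun _ => γ, rfl⟩, _, _, Prod.ext rfl (Prod.ext ?_ ?_)⟩ <;>
    · funext δ
      simp [hγ]
  · ext p
    simp only [regProxRel, proxRel, closure_discrete, Set.mem_ofPred_eq]
    constructor
    · rintro ⟨z, s, hs, a, b, h⟩
      obtain ⟨rfl, h'⟩ := Prod.mk.inj h
      exact ⟨z, s, hs, h'⟩
    · rintro ⟨z, s, hs, h⟩
      exact ⟨z, s, hs, p.1, p.2, Prod.ext rfl h⟩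
end

section
/- If Γ is infinite, then P(ℋ, 𝒳) ⊆ {((x_α)_{α∈Γ}, (y_α)_{α∈Γ}) ∈ 𝒳 × 𝒳 : the set {β ∈ Γ : x_β = y_β} is infinite}; that is, any pair of points of X^Γ proximal under the group of generalized shift homeomorphisms must agree at infinitely many coordinates. -/
/-!
Since `X` is discrete, agreement on a finite set `t` of coordinates is an open condition on
`(Γ → X) × (Γ → X)`, and it holds on the diagonal. So if `(x, y)` is proximal, some bijection `φ`
makes `x ∘ φ` and `y ∘ φ` agree on `t`; then `φ` maps `t` injectively into `{β | x β = y β}`.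
As `Γ` is infinite, `t` can be taken larger than any given finite size.
-/


open Set Topology

/-- for infinite `Γ`, proximal pairs of `(ℋ, 𝒳)` agree at infinitely many
coordinates. -/
theorem proxRel_shiftGroup_subset_of_infinite (X Γ : Type*) [TopologicalSpace X]
    [DiscreteTopology X] [Finite X] [Nontrivial X] [Infinite Γ] :
    proxRel (shiftGroup X Γ) ⊆
      {p : (Γ → X) × (Γ → X) | {β : Γ | p.1 β = p.2 β}.Infinite} := by
  rintro ⟨x, y⟩ ⟨z, hz⟩ hfin
  obtain ⟨t, ht⟩ := Infinite.exists_subset_card_eq Γ (hfin.toFinset.card + 1)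
  have hopen : IsOpen {q : (Γ → X) × (Γ → X) | ∀ γ ∈ t, q.1 γ = q.2 γ} := by
    have : {q : (Γ → X) × (Γ → X) | ∀ γ ∈ t, q.1 γ = q.2 γ} =
        ⋂ γ ∈ t, (fun q : (Γ → X) × (Γ → X) => (q.1 γ, q.2 γ)) ⁻¹' {r | r.1 = r.2} := by
      ext q
      simp
    rw [this]
    exact isOpen_biInter_finset fun γ _ => (isOpen_discrete _).preimage (by fun_prop)
  obtain ⟨_, hq, _, ⟨φ, hφ, rfl⟩, rfl⟩ := mem_closure_iff.1 hz _ hopen fun _ _ => rfl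
  have hle : t.card ≤ hfin.toFinset.card :=
    Finset.card_le_card_of_injOn φ (fun γ hγ => by simpa using hq γ hγ) hφ.1.injOn
  omega
end

section
/- For any nonempty set Γ, P(ℋ, 𝒳) ⊆ {((x_α)_{α∈Γ}, (y_α)_{α∈Γ}) ∈ 𝒳 × 𝒳 : the set {β ∈ Γ : x_β = y_β} is infinite} ∪ {(x, x) : x ∈ 𝒳}; that is, every proximal pair for the group of generalized shift homeomorphisms either agrees at infinitely many coordinates or lies on the diagonal. -/
/-!
If `(z, z)` is a limit of pairs `(x ∘ φ, y ∘ φ)` with `φ` bijective, then for every finite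
`F ⊆ Γ` some bijection `φ` satisfies `x ∘ φ = y ∘ φ` on `F`, because agreement on `F` is an open
condition containing the diagonal. Such a `φ` injects `F` into `E = {β | x β = y β}`. If `E` is
finite and `x β ≠ y β` for some `β`, then `F = E ∪ {β}` has too many elements.
-/

open Set Topology

/-- A proximal pair can be made to agree on any prescribed finite set of coordinates by one
shift homeomorphism. -/
theorem exists_bijective_agree_on_finset {X Γ : Type*} [TopologicalSpace X] [DiscreteTopology X]
    {x y : Γ → X} (h : (x, y) ∈ proxRel (shiftGroup X Γ)) (F : Finset Γ) :
    ∃ φ : Γ → Γ, Function.Bijective φ ∧ ∀ α ∈ F, x (φ α) = y (φ α) := by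
  obtain ⟨z, hz⟩ := h
  have hopen : IsOpen {q : (Γ → X) × (Γ → X) | ∀ α ∈ F, q.1 α = q.2 α} := by
    have heq : {q : (Γ → X) × (Γ → X) | ∀ α ∈ F, q.1 α = q.2 α} =
        ⋂ α ∈ F, {q | q.1 α = q.2 α} := by
      ext q; simp
    rw [heq]
    refine isOpen_biInter_finset fun α _ => ?_
    have hc : Continuous fun q : (Γ → X) × (Γ → X) => (q.1 α, q.2 α) := by fun_prop
    exact (isOpen_discrete (Set.diagonal X)).preimage hc
  obtain ⟨q, hq, s, ⟨φ, hφ, rfl⟩, rfl⟩ := mem_closure_iff.1 hz _ hopen (fun _ _ => rfl)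
  exact ⟨φ, hφ, hq⟩

/-- every proximal pair of `(ℋ, 𝒳)` agrees at infinitely many coordinates or
lies on the diagonal. -/
theorem proxRel_shiftGroup_subset (X Γ : Type*) [TopologicalSpace X] [DiscreteTopology X]
    [Finite X] [Nontrivial X] [Nonempty Γ] :
    proxRel (shiftGroup X Γ) ⊆
      {p : (Γ → X) × (Γ → X) | {β : Γ | p.1 β = p.2 β}.Infinite} ∪
        Set.diagonal (Γ → X) := by
  classical
  rintro ⟨x, y⟩ h
  by_cases hE : {β : Γ | x β = y β}.Infinite
  · exact Or.inl hE
  refine Or.inr (funext fun β => ?_)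
  by_contra hβ
  have hfin := Set.not_infinite.1 hE
  obtain ⟨φ, hφ, hagree⟩ := exists_bijective_agree_on_finset h (insert β hfin.toFinset)
  have hcard : (insert β hfin.toFinset).card ≤ hfin.toFinset.card :=
    Finset.card_le_card_of_injOn φ (fun α hα => by simpa using hagree α hα)
      hφ.injective.injOn
  rw [Finset.card_insert_of_notMem (by simpa using hβ)] at hcard
  omega
end

section
/- If Γ is countably infinite, then P(ℋ, 𝒳) = {((x_α)_{α∈Γ}, (y_α)_{α∈Γ}) ∈ 𝒳 × 𝒳 : the set {β ∈ Γ : x_β = y_β} is infinite}; that is, for a countably infinite index set, a pair of points of X^Γ is proximal under the group of generalized shift homeomorphisms if and only if the two points agree at infinitely many coordinates. -/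
/-!
In the product of discrete spaces, `(z, z)` is in the closure of the `ℋ`-orbit of `(x, y)` iff
for each finite `F ⊆ Γ` some permutation `φ` of `Γ` satisfies `x ∘ φ = z = y ∘ φ` on `F`
(`mem_proxRel_shiftGroup_iff`). Such a `φ` embeds `F` into the agreement set
`E = {β | x β = y β}`; as `F` can be arbitrarily large, `E` is infinite. Conversely, if `E` is
infinite then, `X` being finite, `x` and `y` share a constant value `c` on an infinite subset of
`E`. Any finite `F` is moved into that subset by a permutation of `Γ`, since `Equiv.Perm Γ` acts
`n`-transitively for all `n`, so the constant point `c` serves as `z`.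
-/

open Set Topology

theorem mem_proxRel_shiftGroup_iff {X Γ : Type*} [TopologicalSpace X] [DiscreteTopology X]
    (p : (Γ → X) × (Γ → X)) :
    p ∈ proxRel (shiftGroup X Γ) ↔ ∃ z : Γ → X, ∀ F : Finset Γ, ∃ φ : Γ → Γ,
      Function.Bijective φ ∧ ∀ i ∈ F, p.1 (φ i) = z i ∧ p.2 (φ i) = z i := by
  refine exists_congr fun z => ?_
  rw [mem_closure_iff_nhds]
  constructor
  · intro h F
    have hV : (F : Set Γ).pi (fun i => {z i}) ∈ 𝓝 z :=
      set_pi_mem_nhds F.finite_toSet fun i _ => by simp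
    obtain ⟨q, ⟨hq1, hq2⟩, s, ⟨φ, hφ, rfl⟩, rfl⟩ := h _ (prod_mem_nhds hV hV)
    exact ⟨φ, hφ, fun i hi => ⟨hq1 i hi, hq2 i hi⟩⟩
  · intro h U hU
    obtain ⟨A, hA, hzA, B, hB, hzB, hAB⟩ : ∃ A, IsOpen A ∧ z ∈ A ∧ ∃ B, IsOpen B ∧ z ∈ B ∧
        A ×ˢ B ⊆ U := by
      obtain ⟨A, B, hA, hzA, hB, hzB, hAB⟩ := mem_nhds_prod_iff'.1 hU
      exact ⟨A, hA, hzA, B, hB, hzB, hAB⟩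
    obtain ⟨I, u, hu, hI⟩ := isOpen_pi_iff.1 hA z hzA
    obtain ⟨J, v, hv, hJ⟩ := isOpen_pi_iff.1 hB z hzB
    classical
    obtain ⟨φ, hφ, hF⟩ := h (I ∪ J)
    refine ⟨(p.1 ∘ φ, p.2 ∘ φ), hAB ⟨hI fun i hi => ?_, hJ fun i hi => ?_⟩,
      _, ⟨φ, hφ, rfl⟩, rfl⟩
    · simpa [(hF i (Finset.mem_union_left _ hi)).1] using (hu i hi).2
    · simpa [(hF i (Finset.mem_union_right _ hi)).2] using (hv i hi).2

/-- A consequence of the high transitivity of the full permutation group. -/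
theorem exists_bijective_mapsTo_of_infinite {Γ : Type*} {S : Set Γ} (hS : S.Infinite)
    (F : Finset Γ) : ∃ φ : Γ → Γ, Function.Bijective φ ∧ ∀ i ∈ F, φ i ∈ S := by
  have := hS.to_subtype
  let e : Fin F.card ↪ Γ := F.equivFin.symm.toEmbedding.trans (Function.Embedding.subtype _)
  let g : Fin F.card ↪ Γ :=
    (Fin.valEmbedding.trans (Infinite.natEmbedding S)).trans (Function.Embedding.subtype _)
  have := Equiv.Perm.isMultiplyPretransitive Γ F.card
  obtain ⟨σ, hσ⟩ := MulAction.exists_smul_eq (Equiv.Perm Γ) e g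
  refine ⟨σ, σ.bijective, fun i hi => ?_⟩
  have h := DFunLike.congr_fun hσ (F.equivFin ⟨i, hi⟩)
  have h' : σ i = g (F.equivFin ⟨i, hi⟩) := by simpa [e] using h
  rw [h']
  exact Subtype.coe_prop _

/-- for countably infinite `Γ`, `P(ℋ, 𝒳)` is exactly the set of pairs agreeing
at infinitely many coordinates. -/
theorem proxRel_shiftGroup_of_countable_infinite (X Γ : Type*) [TopologicalSpace X]
    [DiscreteTopology X] [Finite X] [Nontrivial X] [Countable Γ] [Infinite Γ] :
    proxRel (shiftGroup X Γ) =
      {p : (Γ → X) × (Γ → X) | {β : Γ | p.1 β = p.2 β}.Infinite} := by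
  ext ⟨x, y⟩
  rw [mem_proxRel_shiftGroup_iff]
  change _ ↔ {β : Γ | x β = y β}.Infinite
  constructor
  · rintro ⟨z, hz⟩ hfin
    obtain ⟨F, hF⟩ := Infinite.exists_subset_card_eq Γ (hfin.toFinset.card + 1)
    obtain ⟨φ, hφ, h⟩ := hz F
    have hle : F.card ≤ hfin.toFinset.card :=
      Finset.card_le_card_of_injOn φ
        (fun i hi => by simpa using (h i hi).1.trans (h i hi).2.symm) hφ.injective.injOn
    omega
  · intro hE
    -- pigeonhole: some value `c` is taken by both points on an infinite set
    obtain ⟨c, hc⟩ : ∃ c : X, {β : Γ | x β = c ∧ y β = c}.Infinite := by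
      by_contra! hcon
      refine hE ((Set.finite_iUnion hcon).subset fun β hβ => ?_)
      exact Set.mem_iUnion.2 ⟨x β, rfl, Eq.symm hβ⟩
    exact ⟨fun _ => c, exists_bijective_mapsTo_of_infinite hc⟩
end

section
/- If Γ is countable (finite or countably infinite), then P(ℋ, 𝒳) = {((x_α)_{α∈Γ}, (y_α)_{α∈Γ}) ∈ 𝒳 × 𝒳 : the set {β ∈ Γ : x_β = y_β} is infinite} ∪ {(x, x) : x ∈ 𝒳}. -/
/-!
Everything takes place on the agreement set `A = {β | x β = y β}`. For finite `F ⊆ Γ`, agreement on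
the coordinates in `F` is an open condition on a pair that holds on the diagonal. Hence if `(x, y)`
is proximal, every finite `F` is mapped into `A` by some bijection `φ`. When `A` is finite and
`x ≠ y`, this fails for `F = A ∪ {β}` with `β ∉ A`, for reasons of cardinality.

Conversely, if `A` is infinite then, `X` being finite, `x = y = c` on an infinite set `B ⊆ A` for
some `c : X`. The symmetric group of `Γ` acts `n`-transitively for every `n`, so each finite `F` is
mapped into `B` by a permutation, and the corresponding shifts of `(x, y)` converge to the constant
pair `(c, c)`. Countability of `Γ` plays no role in either direction.
-/

open Set Topology

theorem exists_perm_mapsTo_of_infinite {Γ : Type*} {B : Set Γ} (hB : B.Infinite) (F : Finset Γ) :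
    ∃ g : Equiv.Perm Γ, ∀ a ∈ F, g a ∈ B := by
  obtain ⟨G, hGB, hG⟩ := hB.exists_subset_card_eq F.card
  let u : Fin F.card ↪ Γ := F.equivFin.symm.toEmbedding.trans (Function.Embedding.subtype _)
  let v : Fin F.card ↪ Γ :=
    (G.equivFinOfCardEq hG).symm.toEmbedding.trans (Function.Embedding.subtype _)
  have := Equiv.Perm.isMultiplyPretransitive Γ F.card
  obtain ⟨g, hg⟩ := MulAction.exists_smul_eq (Equiv.Perm Γ) u v
  refine ⟨g, fun a ha => hGB ?_⟩
  have h := DFunLike.congr_fun hg (F.equivFin ⟨a, ha⟩)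
  have hu : u (F.equivFin ⟨a, ha⟩) = a := by simp [u]
  rw [Function.Embedding.smul_apply, hu, Equiv.Perm.smul_def] at h
  rw [h]
  exact ((G.equivFinOfCardEq hG).symm (F.equivFin ⟨a, ha⟩)).2

theorem mem_proxRel_of_infinite {X Γ : Type*} [TopologicalSpace X] [Finite X] {x y : Γ → X}
    (h : {β | x β = y β}.Infinite) : (x, y) ∈ proxRel (shiftGroup X Γ) := by
  obtain ⟨c, hc⟩ : ∃ c, {β | x β = c ∧ y β = c}.Infinite := by
    by_contra! hcon
    refine h ((Set.finite_iUnion fun c => hcon c).subset fun β hβ => ?_)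
    exact Set.mem_iUnion.2 ⟨x β, rfl, hβ.symm⟩
  choose g hg using fun F : Finset Γ => exists_perm_mapsTo_of_infinite hc F
  have key (w : Γ → X) (hw : ∀ F, ∀ a ∈ F, w (g F a) = c) :
      Filter.Tendsto (fun F => w ∘ g F) Filter.atTop (𝓝 fun _ => c) := by
    refine tendsto_pi_nhds.2 fun a => tendsto_const_nhds.congr' ?_
    filter_upwards [Filter.eventually_ge_atTop {a}] with F hF
    exact (hw F a (hF (Finset.mem_singleton_self a))).symm
  refine ⟨fun _ => c, mem_closure_of_tendsto
    ((key x fun F a ha => (hg F a ha).1).prodMk_nhds (key y fun F a ha => (hg F a ha).2)) ?_⟩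
  exact Filter.Eventually.of_forall fun F => ⟨_, ⟨g F, (g F).bijective, rfl⟩, rfl⟩

theorem exists_bijective_of_mem_proxRel {X Γ : Type*} [TopologicalSpace X] [DiscreteTopology X]
    {x y : Γ → X} (h : (x, y) ∈ proxRel (shiftGroup X Γ)) (F : Finset Γ) :
    ∃ φ : Γ → Γ, Function.Bijective φ ∧ ∀ a ∈ F, x (φ a) = y (φ a) := by
  obtain ⟨z, hz⟩ := h
  have ho : IsOpen (⋂ a ∈ F, {q : (Γ → X) × (Γ → X) | q.1 a = q.2 a}) := by
    refine isOpen_biInter_finset fun a _ => ?_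
    exact (isOpen_discrete (Set.diagonal X)).preimage
      (f := fun q : (Γ → X) × (Γ → X) => (q.1 a, q.2 a)) (by fun_prop)
  obtain ⟨q, hq, s, ⟨φ, hφ, rfl⟩, rfl⟩ := mem_closure_iff.1 hz _ ho (by simp)
  exact ⟨φ, hφ, by simpa using hq⟩

/-- for countable `Γ`, `P(ℋ, 𝒳)` is exactly the set of pairs agreeing at
infinitely many coordinates together with the diagonal. -/
theorem proxRel_shiftGroup_of_countable (X Γ : Type*) [TopologicalSpace X] [DiscreteTopology X]
    [Finite X] [Nontrivial X] [Nonempty Γ] [Countable Γ] :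
    proxRel (shiftGroup X Γ) =
      {p : (Γ → X) × (Γ → X) | {β : Γ | p.1 β = p.2 β}.Infinite} ∪
        Set.diagonal (Γ → X) := by
  classical
  ext ⟨x, y⟩
  constructor
  · intro h
    by_contra hcon
    simp only [Set.mem_union, Set.mem_ofPred_eq, Set.mem_diagonal_iff, not_or,
      Set.not_infinite] at hcon
    obtain ⟨hfin, hne⟩ := hcon
    obtain ⟨β, hβ⟩ := Function.ne_iff.1 hne
    obtain ⟨φ, hφ, hF⟩ := exists_bijective_of_mem_proxRel h (insert β hfin.toFinset)
    have hle := Finset.card_le_card_of_injOn (t := hfin.toFinset) φ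
      (fun a ha => by simpa using hF a ha) hφ.1.injOn
    rw [Finset.card_insert_of_notMem (by simpa using hβ)] at hle
    omega
  · rintro (h | h)
    · exact mem_proxRel_of_infinite h
    · obtain rfl : x = y := h
      exact ⟨x, subset_closure ⟨_, ⟨id, Function.bijective_id, rfl⟩, rfl⟩⟩
end

section
/- If Γ is infinite, then {((x_α)_{α∈Γ}, (y_α)_{α∈Γ}) ∈ 𝒳 × 𝒳 : card({β ∈ Γ : x_β ≠ y_β}) ≤ card({β ∈ Γ : x_β = y_β})} ⊆ P(ℋ, 𝒳); that is, if the cardinality of the set of coordinates where two points disagree is at most the cardinality of the set of coordinates where they agree, then the pair is proximal under the group of generalized shift homeomorphisms. -/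
/-!
Since `Γ` is infinite, the agreement set of a pair `(x, y)` in the given set is infinite: it is
at least as large as its complement. As `X` is finite, the pigeonhole principle yields `a : X`
such that `x = y = a` on an infinite set `A`. Every finite `F ⊆ Γ` can be moved into `A` by a
permutation `φ` of `Γ`, because the symmetric group is `n`-transitive for all `n`; then `x ∘ φ`
and `y ∘ φ` both equal `a` on `F`. Letting `F` grow, both converge to the constant point `a`.
-/

open Set Topology

/-- Any finite subset of `Γ` can be moved into a given infinite subset by a permutation of `Γ`. -/
theorem exists_perm_mapsTo_of_infinite_s10 {Γ : Type*} {A : Set Γ} (hA : A.Infinite) (F : Finset Γ) :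
    ∃ φ : Equiv.Perm Γ, ∀ i ∈ F, φ i ∈ A := by
  have := hA.to_subtype
  let u : Fin F.card ↪ Γ := F.equivFin.symm.toEmbedding.trans (Function.Embedding.subtype _)
  let v : Fin F.card ↪ Γ := (Fin.valEmbedding.trans (Infinite.natEmbedding A)).trans
    (Function.Embedding.subtype _)
  obtain ⟨g, hg⟩ :=
    (Equiv.Perm.isMultiplyPretransitive Γ F.card).exists_smul_eq u v
  refine ⟨g, fun i hi => ?_⟩
  have h := DFunLike.congr_fun hg (F.equivFin ⟨i, hi⟩)
  have hu : u (F.equivFin ⟨i, hi⟩) = i := by simp [u]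
  rw [Function.Embedding.smul_apply, hu] at h
  change g i = _ at h
  rw [h]
  exact (Infinite.natEmbedding A _).2

theorem infinite_agreement_of_card_le {X Γ : Type*} [Infinite Γ] {x y : Γ → X}
    (h : Cardinal.mk {β : Γ | x β ≠ y β} ≤ Cardinal.mk {β : Γ | x β = y β}) :
    {β : Γ | x β = y β}.Infinite := by
  intro hfin
  have hne : {β : Γ | x β ≠ y β}.Finite :=
    Cardinal.lt_aleph0_iff_set_finite.1 (h.trans_lt (Cardinal.lt_aleph0_iff_set_finite.2 hfin))
  refine Set.infinite_univ (α := Γ) ((hfin.union hne).subset fun β _ => ?_)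
  exact em (x β = y β)

/-- for infinite `Γ`, a pair whose disagreement set has cardinality at most
that of its agreement set is proximal for `(ℋ, 𝒳)`. -/
theorem card_le_subset_proxRel_shiftGroup (X Γ : Type*) [TopologicalSpace X]
    [DiscreteTopology X] [Finite X] [Nontrivial X] [Infinite Γ] :
    {p : (Γ → X) × (Γ → X) |
        Cardinal.mk {β : Γ | p.1 β ≠ p.2 β} ≤ Cardinal.mk {β : Γ | p.1 β = p.2 β}} ⊆
      proxRel (shiftGroup X Γ) := by
  rintro ⟨x, y⟩ h
  have hE := infinite_agreement_of_card_le h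
  have := hE.to_subtype
  obtain ⟨a, hfib⟩ := Finite.exists_infinite_fiber fun β : {β : Γ | x β = y β} => x β
  have ha : {β : Γ | x β = y β ∧ x β = a}.Infinite :=
    ((Set.infinite_coe_iff.1 hfib).image Subtype.val_injective.injOn).mono
      (by rintro _ ⟨β, hβ, rfl⟩; exact ⟨β.2, hβ⟩)
  choose φ hφ using exists_perm_mapsTo_of_infinite_s10 ha
  -- The net is indexed by the finite subsets `F` of `Γ`; each coordinate is eventually `a`.
  refine ⟨fun _ => a, mem_closure_of_tendsto (b := Filter.atTop)
    (f := fun F : Finset Γ => (x ∘ φ F, y ∘ φ F)) ?_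
    (Filter.Eventually.of_forall fun F => ⟨_, ⟨φ F, (φ F).bijective, rfl⟩, rfl⟩)⟩
  refine Filter.Tendsto.prodMk_nhds (tendsto_pi_nhds.2 fun i => ?_) (tendsto_pi_nhds.2 fun i => ?_)
  all_goals
    refine tendsto_const_nhds.congr' ?_
    filter_upwards [Filter.eventually_ge_atTop {i}] with F hF
    obtain ⟨hxy, hx⟩ := hφ F i (Finset.singleton_subset_iff.1 hF)
  · exact hx.symm
  · exact hx.symm.trans hxy
end

section
/- Let (x_α)_{α∈Γ}, (y_α)_{α∈Γ}, (u_α)_{α∈Γ} ∈ 𝒳 and p, q ∈ X, and define z_α := q if x_α ≠ y_α and z_α := u_α if x_α = y_α, and w_α := p if x_α ≠ y_α and w_α := u_α if x_α = y_α. If ((x_α)_{α∈Γ}, (y_α)_{α∈Γ}) ∈ P(ℋ, 𝒳), then ((z_α)_{α∈Γ}, (w_α)_{α∈Γ}) ∈ P(ℋ, 𝒳). -/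
/-!
Choose an ultrafilter of bijections `φ` along which `(x ∘ φ, y ∘ φ)` converges to a diagonal point.
As `X` is discrete, for each `α` the points `x` and `y` agree at `φ α` for almost all `φ`, hence so
do `z` and `w`. By compactness of `X ^ Γ`, `z ∘ φ` converges along the ultrafilter, and `w ∘ φ` has
the same limit because it agrees with `z ∘ φ` eventually in each coordinate.
-/

open Set Topology

/-- replacing two proximal points by `q`/`p` on their disagreement set and by a
common point `u` on their agreement set yields a proximal pair for `(ℋ, 𝒳)`. -/
theorem proxRel_shiftGroup_modify (X Γ : Type*) [TopologicalSpace X] [DiscreteTopology X]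
    [Finite X] [Nontrivial X] [Nonempty Γ]
    (x y u : Γ → X) (p q : X) (z w : Γ → X)
    (hz : ∀ α : Γ, (x α = y α → z α = u α) ∧ (x α ≠ y α → z α = q))
    (hw : ∀ α : Γ, (x α = y α → w α = u α) ∧ (x α ≠ y α → w α = p))
    (hxy : (x, y) ∈ proxRel (shiftGroup X Γ)) :
    (z, w) ∈ proxRel (shiftGroup X Γ) := by
  obtain ⟨c, hc⟩ := hxy
  let g : (Γ → X) × (Γ → X) → {φ : Γ → Γ // Function.Bijective φ} → (Γ → X) × (Γ → X) :=
    fun r φ => (r.1 ∘ φ.1, r.2 ∘ φ.1)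
  have key : ∀ r, {t : (Γ → X) × (Γ → X) | ∃ s ∈ shiftGroup X Γ, t = (s r.1, s r.2)}
      = range (g r) := by
    intro r
    ext t
    constructor
    · rintro ⟨_, ⟨φ, hφ, rfl⟩, rfl⟩
      exact ⟨⟨φ, hφ⟩, rfl⟩
    · rintro ⟨φ, rfl⟩
      exact ⟨_, ⟨φ.1, φ.2, rfl⟩, rfl⟩
  rw [key] at hc
  have hne : (Filter.comap (g (x, y)) (𝓝 (c, c))).NeBot :=
    Filter.comap_neBot_iff.2 fun t ht => by
      obtain ⟨_, h, φ, rfl⟩ := mem_closure_iff_nhds.1 hc t ht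
      exact ⟨φ, h⟩
  let U := Ultrafilter.of (Filter.comap (g (x, y)) (𝓝 (c, c)))
  have hU : Filter.Tendsto (g (x, y)) U (𝓝 (c, c)) :=
    Filter.tendsto_iff_comap.2 (Ultrafilter.of_le _)
  rw [nhds_prod_eq, Filter.tendsto_prod_iff'] at hU
  have hagree : ∀ α, ∀ᶠ φ : {φ : Γ → Γ // Function.Bijective φ} in U, z (φ.1 α) = w (φ.1 α) := by
    intro α
    have h1 := tendsto_pi_nhds.1 hU.1 α
    have h2 := tendsto_pi_nhds.1 hU.2 α
    rw [nhds_discrete, Filter.tendsto_pure] at h1 h2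
    filter_upwards [h1, h2] with φ e1 e2
    have e : x (φ.1 α) = y (φ.1 α) := e1.trans e2.symm
    rw [(hz _).1 e, (hw _).1 e]
  obtain ⟨a, -, ha⟩ := isCompact_univ.ultrafilter_le_nhds
    (U.map fun φ => z ∘ φ.1) (by simp)
  have ha' : Filter.Tendsto (fun φ : {φ : Γ → Γ // Function.Bijective φ} => z ∘ φ.1) U (𝓝 a) := ha
  have hb : Filter.Tendsto (fun φ : {φ : Γ → Γ // Function.Bijective φ} => w ∘ φ.1) U (𝓝 a) :=
    tendsto_pi_nhds.2 fun α => (tendsto_pi_nhds.1 ha' α).congr' (hagree α)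
  refine ⟨a, ?_⟩
  rw [key]
  exact mem_closure_of_tendsto (ha'.prodMk_nhds hb) (Filter.Eventually.of_forall mem_range_self)
end

section
/- Let (x_α)_{α∈Γ}, (y_α)_{α∈Γ}, (u_α)_{α∈Γ} ∈ 𝒳 and p, q ∈ X, and define z_α := q if x_α ≠ y_α and z_α := u_α if x_α = y_α, and w_α := p if x_α ≠ y_α and w_α := u_α if x_α = y_α. If ((x_α)_{α∈Γ}, (y_α)_{α∈Γ}) ∈ L(ℋ, 𝒳), then ((z_α)_{α∈Γ}, (w_α)_{α∈Γ}) ∈ L(ℋ, 𝒳). -/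
/-!
Consider the relation between pairs `(a, b)` and `(c, d)` saying that `c` agrees with `d` wherever
`a` agrees with `b`. It is invariant under simultaneous shifts, closed because `X` is discrete, and
holds between `(x, y)` and `(z, w)`. By compactness (`exists_mem_closure_rel`), limits along one
orbit lift to limits along the other which are still related. Hence every `(c, d)` in the orbit
closure of `(z, w)` is dominated by some `(a, b)` in the orbit closure of `(x, y)`; as `(a, b)` is
proximal, its orbit accumulates at a diagonal point `(v, v)`, and lifting once more the orbit of
`(c, d)` accumulates at a pair dominated by `(v, v)`, which is a diagonal pair.
-/

open Set Topology

/-- Let `R` be a closed relation on pairs holding between the images of `p` and `r` under each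
`t ∈ T`. Then each point of the orbit closure of `p` is `R`-related to one of the orbit closure of
`r`: the projection of the closure of the joint orbit is closed, by compactness. -/
theorem exists_mem_closure_rel {Z : Type*} [TopologicalSpace Z] [CompactSpace Z] [T2Space Z]
    (T : Set (Z → Z)) (R : Set ((Z × Z) × (Z × Z))) (hR : IsClosed R) (p r : Z × Z)
    (h : ∀ t ∈ T, ((t p.1, t p.2), (t r.1, t r.2)) ∈ R) {a : Z × Z}
    (ha : a ∈ closure {q : Z × Z | ∃ t ∈ T, q = (t p.1, t p.2)}) :
    ∃ c ∈ closure {q : Z × Z | ∃ t ∈ T, q = (t r.1, t r.2)}, (a, c) ∈ R := by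
  let J : Set ((Z × Z) × (Z × Z)) := {j | ∃ t ∈ T, j = ((t p.1, t p.2), (t r.1, t r.2))}
  have hsub : {q : Z × Z | ∃ t ∈ T, q = (t p.1, t p.2)} ⊆ Prod.fst '' closure J := by
    rintro _ ⟨t, ht, rfl⟩
    exact ⟨_, subset_closure ⟨t, ht, rfl⟩, rfl⟩
  have hclosed : IsClosed (Prod.fst '' closure J) :=
    (continuous_fst.isClosedMap) _ isClosed_closure
  obtain ⟨⟨a', c⟩, hj, rfl⟩ := closure_minimal hsub hclosed ha
  refine ⟨c, ?_, closure_minimal ?_ hR hj⟩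
  · refine map_mem_closure continuous_snd hj ?_
    rintro _ ⟨t, ht, rfl⟩
    exact ⟨t, ht, rfl⟩
  · rintro _ ⟨t, ht, rfl⟩
    exact h t ht

/-- The relation "`j.2` is a pair of points agreeing wherever the two points of `j.1` agree" is
closed, since in a discrete space each coordinate condition is clopen. -/
theorem isClosed_agree_rel (X Γ : Type*) [TopologicalSpace X] [DiscreteTopology X] :
    IsClosed {j : ((Γ → X) × (Γ → X)) × ((Γ → X) × (Γ → X)) |
      ∀ α, j.1.1 α = j.1.2 α → j.2.1 α = j.2.2 α} := by
  rw [Set.ofPred_forall]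
  refine isClosed_iInter fun α => ?_
  have hc : Continuous fun j : ((Γ → X) × (Γ → X)) × ((Γ → X) × (Γ → X)) =>
      ((j.1.1 α, j.1.2 α), (j.2.1 α, j.2.2 α)) := by fun_prop
  exact (isClosed_discrete
    {k : (X × X) × (X × X) | k.1.1 = k.1.2 → k.2.1 = k.2.2}).preimage hc

/-- replacing two syndetically proximal points by `q`/`p` on their disagreement
set and by a common point `u` on their agreement set yields a syndetically proximal pair for
`(ℋ, 𝒳)`. -/
theorem synProxRel_shiftGroup_modify (X Γ : Type*) [TopologicalSpace X] [DiscreteTopology X]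
    [Finite X] [Nontrivial X] [Nonempty Γ]
    (x y u : Γ → X) (p q : X) (z w : Γ → X)
    (hz : ∀ α : Γ, (x α = y α → z α = u α) ∧ (x α ≠ y α → z α = q))
    (hw : ∀ α : Γ, (x α = y α → w α = u α) ∧ (x α ≠ y α → w α = p))
    (hxy : (x, y) ∈ synProxRel (shiftGroup X Γ)) :
    (z, w) ∈ synProxRel (shiftGroup X Γ) := by
  have hR := isClosed_agree_rel X Γ
  intro c hc
  -- The relation is used here with its two sides swapped, to lift from the orbit of `(z, w)`.
  obtain ⟨a, ha, hac⟩ := exists_mem_closure_rel (shiftGroup X Γ) _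
    (hR.preimage continuous_swap) (z, w) (x, y) (by
      rintro _ ⟨φ, -, rfl⟩ α h
      exact ((hz (φ α)).1 h).trans ((hw (φ α)).1 h).symm) hc
  obtain ⟨v, hv⟩ := hxy ha
  obtain ⟨⟨d, e⟩, hd, hde⟩ := exists_mem_closure_rel (shiftGroup X Γ) _ hR a c (by
      rintro _ ⟨φ, -, rfl⟩ α h
      exact hac (φ α) h) hv
  obtain rfl : d = e := funext fun α => hde α rfl
  exact ⟨d, hd⟩
end

section
/- L(ℋ, 𝒳) ⊆ {((x_α)_{α∈Γ}, (y_α)_{α∈Γ}) ∈ 𝒳 × 𝒳 : the set {γ ∈ Γ : x_γ ≠ y_γ} is finite}; that is, every syndetically proximal pair for the group of generalized shift homeomorphisms differs at only finitely many coordinates. -/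
/-!
Suppose `x` and `y` differ at infinitely many coordinates. As `X × X` is finite, some pair
`(a, b)` with `a ≠ b` is the value of `(x, y)` on an infinite set `E` of coordinates.
Any finite `F ⊆ Γ` can be moved into `E` by a permutation of `Γ` (`exists_perm_mapsTo`), so the
pair of constant points `(a, b)` lies in the orbit closure of `(x, y)`. But every generalized
shift fixes this pair, so its orbit closure is a single off-diagonal point: it is not proximal.
-/

open Set Topology

/-- Permutations act `n`-transitively for every `n`, so they move any finite set into any
infinite one. -/
lemma exists_perm_mapsTo {Γ : Type*} {E : Set Γ} (hE : E.Infinite) (F : Finset Γ) :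
    ∃ φ : Equiv.Perm Γ, ∀ γ ∈ F, φ γ ∈ E := by
  have : Infinite E := hE.to_subtype
  let u : Fin F.card ↪ Γ := F.equivFin.symm.toEmbedding.trans (Function.Embedding.subtype _)
  let v : Fin F.card ↪ Γ :=
    (Fin.valEmbedding.trans (Infinite.natEmbedding E)).trans (Function.Embedding.subtype _)
  have := Equiv.Perm.isMultiplyPretransitive Γ F.card
  obtain ⟨φ, hφ⟩ := MulAction.exists_smul_eq (Equiv.Perm Γ) u v
  refine ⟨φ, fun γ hγ => ?_⟩
  have h := DFunLike.congr_fun hφ (F.equivFin ⟨γ, hγ⟩)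
  have hu : u (F.equivFin ⟨γ, hγ⟩) = γ := by simp [u]
  rw [Function.Embedding.smul_apply, hu, Equiv.Perm.smul_def] at h
  rw [h]
  exact (Infinite.natEmbedding E _).2

/-- every syndetically proximal pair for `(ℋ, 𝒳)` differs at only finitely many
coordinates. -/
theorem synProxRel_shiftGroup_subset (X Γ : Type*) [TopologicalSpace X] [DiscreteTopology X]
    [Finite X] [Nontrivial X] [Nonempty Γ] :
    synProxRel (shiftGroup X Γ) ⊆
      {p : (Γ → X) × (Γ → X) | {γ : Γ | p.1 γ ≠ p.2 γ}.Finite} := by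
  rintro ⟨x, y⟩ hp
  by_contra hinf
  change ¬ {γ : Γ | x γ ≠ y γ}.Finite at hinf
  -- Pigeonhole: some off-diagonal value of `(x, y)` is attained infinitely often.
  obtain ⟨a, b, hab, hE⟩ : ∃ a b : X, a ≠ b ∧ {γ | x γ = a ∧ y γ = b}.Infinite := by
    by_contra! h
    refine hinf ((Set.finite_iUnion fun q : {q : X × X // q.1 ≠ q.2} =>
      h q.1.1 q.1.2 q.2).subset fun γ hγ => ?_)
    exact Set.mem_iUnion.2 ⟨⟨(x γ, y γ), hγ⟩, rfl, rfl⟩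
  choose φ hφ using exists_perm_mapsTo hE
  have hmem : ((fun _ => a, fun _ => b) : (Γ → X) × (Γ → X)) ∈
      closure {q | ∃ t ∈ shiftGroup X Γ, q = (t x, t y)} := by
    refine mem_closure_of_tendsto (b := Filter.atTop)
      (f := fun F : Finset Γ => (x ∘ φ F, y ∘ φ F)) ?_
      (.of_forall fun F => ⟨fun z => z ∘ φ F, ⟨φ F, (φ F).bijective, rfl⟩, rfl⟩)
    refine Filter.Tendsto.prodMk_nhds ?_ ?_ <;> refine tendsto_pi_nhds.2 fun γ =>
      tendsto_const_nhds.congr' ?_ <;>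
      filter_upwards [Filter.eventually_ge_atTop {γ}] with F hF
    · exact (hφ F γ (hF (Finset.mem_singleton_self γ))).1.symm
    · exact (hφ F γ (hF (Finset.mem_singleton_self γ))).2.symm
  obtain ⟨z, hz⟩ := hp hmem
  -- The orbit of the constant pair is a singleton, hence closed.
  have hsub : {q : (Γ → X) × (Γ → X) | ∃ s ∈ shiftGroup X Γ,
      q = (s fun _ => a, s fun _ => b)} ⊆ {(fun _ => a, fun _ => b)} := by
    rintro _ ⟨_, ⟨ψ, -, rfl⟩, rfl⟩
    rfl
  have hz' := closure_minimal hsub isClosed_singleton hz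
  obtain ⟨γ⟩ := ‹Nonempty Γ›
  have h := Prod.mk.inj (Set.mem_singleton_iff.1 hz')
  exact hab (congrFun (h.1.symm.trans h.2) γ)
end

section
/- Let ((x_α)_{α∈Γ}, (y_α)_{α∈Γ}) ∈ 𝒳 × 𝒳 with {α ∈ Γ : x_α ≠ y_α} finite. If ((z_α)_{α∈Γ}, (w_α)_{α∈Γ}) belongs to the closure in 𝒳 × 𝒳 of the orbit {(σ_φ((x_α)_{α∈Γ}), σ_φ((y_α)_{α∈Γ})) : σ_φ ∈ ℋ}, then {α ∈ Γ : z_α ≠ w_α} is finite and card({α ∈ Γ : z_α ≠ w_α}) ≤ card({α ∈ Γ : x_α ≠ y_α}). -/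
/-! A finite set `F` of coordinates on which `z` and `w` disagree defines an open neighbourhood
of `(z, w)`, since `X` is discrete. It therefore contains some `(x ∘ φ, y ∘ φ)` with `φ` bijective,
and `φ` maps `F` injectively into the disagreement set of `x` and `y`. Thus every finite subset of
the disagreement set of `z` and `w` has at most as many elements as that of `x` and `y`, which gives
both finiteness and the bound. -/

open Set Topology

/-- a point of the `ℋ`-orbit closure of a pair with finite disagreement set has
finite disagreement set of cardinality at most that of the original pair. -/
theorem orbitClosure_diff_card_le (X Γ : Type*) [TopologicalSpace X] [DiscreteTopology X]
    [Finite X] [Nontrivial X] [Nonempty Γ]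
    (x y z w : Γ → X) (hfin : {α : Γ | x α ≠ y α}.Finite)
    (hcl : (z, w) ∈
      closure {q : (Γ → X) × (Γ → X) | ∃ s ∈ shiftGroup X Γ, q = (s x, s y)}) :
    {α : Γ | z α ≠ w α}.Finite ∧
      Cardinal.mk {α : Γ | z α ≠ w α} ≤ Cardinal.mk {α : Γ | x α ≠ y α} := by
  have key : ∀ F : Finset Γ, (F : Set Γ) ⊆ {α : Γ | z α ≠ w α} →
      F.card ≤ hfin.toFinset.card := by
    intro F hF
    have hopen : IsOpen {q : (Γ → X) × (Γ → X) | ∀ α ∈ F, q.1 α ≠ q.2 α} := by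
      have h : {q : (Γ → X) × (Γ → X) | ∀ α ∈ F, q.1 α ≠ q.2 α} =
          ⋂ α ∈ F, {q : (Γ → X) × (Γ → X) | q.1 α ≠ q.2 α} := by
        ext q
        simp
      rw [h]
      exact isOpen_biInter_finset fun α _ => isOpen_ne_fun (by fun_prop) (by fun_prop)
    obtain ⟨q, hq, s, ⟨φ, hφ, rfl⟩, rfl⟩ :=
      mem_closure_iff.1 hcl _ hopen fun α hα => hF hα
    refine Finset.card_le_card_of_injOn φ (fun α hα => ?_) hφ.injective.injOn
    simpa using hq α hα
  have hle : Cardinal.mk {α : Γ | z α ≠ w α} ≤ (hfin.toFinset.card : Cardinal) :=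
    Cardinal.mk_le_iff_forall_finset_subset_card_le.2 key
  refine ⟨Cardinal.lt_aleph0_iff_set_finite.1 (hle.trans_lt Cardinal.natCast_lt_aleph0), ?_⟩
  have hcard : Cardinal.mk {α : Γ | x α ≠ y α} = (hfin.toFinset.card : Cardinal) :=
    (congrArg (fun s : Set Γ => Cardinal.mk s) hfin.coe_toFinset).symm.trans Cardinal.mk_coe_finset
  rwa [hcard]
end

section
/- L(ℋ, 𝒳) equals {((x_α)_{α∈Γ}, (y_α)_{α∈Γ}) ∈ 𝒳 × 𝒳 : the set {γ ∈ Γ : x_γ ≠ y_γ} is finite} if Γ is infinite, and equals {(x, x) : x ∈ 𝒳} if Γ is finite; that is, the syndetically proximal relation of the group of generalized shift homeomorphisms consists exactly of the pairs differing at only finitely many coordinates when Γ is infinite, and is the diagonal when Γ is finite. -/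
/-!
Since `X` is discrete, a pair `(u, v)` lies in the closure of the `ℋ`-orbit of `(x, y)` iff on
every finite set of coordinates it agrees with `(x ∘ φ, y ∘ φ)` for some permutation `φ`
(`mem_closure_orbit_iff`). Permutations of `Γ` move any finite set into any given infinite set,
so if `(x, y)` takes the value `(a, b)` at infinitely many coordinates, then the pair of constant
functions `(a, b)` is in the orbit closure (`const_mem_closure_orbit`).

For infinite `Γ`, `(x, y)` is therefore proximal iff `x` and `y` agree at infinitely many
coordinates (`mem_proxRel_iff`): as `X` is finite, some common value is then taken infinitely often,
and conversely a permutation carries arbitrarily large finite sets into the set of agreement.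
If `x` and `y` differ at infinitely many coordinates, then by pigeonhole the orbit closure
contains a pair of distinct constants, which is not proximal. If they differ at exactly `n`
coordinates, then every pair in the orbit closure differs at no more than `n` coordinates, so it
is proximal. For finite `Γ` the orbit is closed, so only equal points are proximal.
-/


open Set Topology

/-- Orbit closures in `X ^ Γ × X ^ Γ` are determined by finite sets of coordinates. -/
theorem mem_closure_orbit_iff {X Γ : Type*} [TopologicalSpace X] [DiscreteTopology X]
    (p w : (Γ → X) × (Γ → X)) :
    w ∈ closure {q : (Γ → X) × (Γ → X) | ∃ s ∈ shiftGroup X Γ, q = (s p.1, s p.2)} ↔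
      ∀ F : Finset Γ, ∃ φ : Γ → Γ, Function.Bijective φ ∧
        ∀ i ∈ F, p.1 (φ i) = w.1 i ∧ p.2 (φ i) = w.2 i := by
  classical
  rw [mem_closure_iff_nhds]
  constructor
  · intro h F
    have hF : ∀ u : Γ → X, {f : Γ → X | ∀ i ∈ F, f i = u i} ∈ 𝓝 u := by
      intro u
      have : {f : Γ → X | ∀ i ∈ F, f i = u i} = (F : Set Γ).pi fun i => {u i} := by
        ext f; simp [Set.mem_pi]
      rw [this]
      exact set_pi_mem_nhds F.finite_toSet fun i _ => (isOpen_discrete _).mem_nhds rfl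
    obtain ⟨q, ⟨h1, h2⟩, _, ⟨φ, hφ, rfl⟩, rfl⟩ := h _ (prod_mem_nhds (hF w.1) (hF w.2))
    exact ⟨φ, hφ, fun i hi => ⟨h1 i hi, h2 i hi⟩⟩
  · intro h t ht
    obtain ⟨U, hU, V, hV, hUV⟩ := mem_nhds_prod_iff.1 ht
    rw [nhds_pi, Filter.mem_pi] at hU hV
    obtain ⟨I, hI, S, hS, hSU⟩ := hU
    obtain ⟨J, hJ, T, hT, hTV⟩ := hV
    obtain ⟨φ, hφ, hφF⟩ := h (hI.toFinset ∪ hJ.toFinset)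
    refine ⟨(p.1 ∘ φ, p.2 ∘ φ), hUV ⟨hSU fun i hi => ?_, hTV fun i hi => ?_⟩,
      _, ⟨φ, hφ, rfl⟩, rfl⟩
    · have := (hφF i (by simp [hi])).1
      simpa [this] using mem_of_mem_nhds (hS i)
    · have := (hφF i (by simp [hi])).2
      simpa [this] using mem_of_mem_nhds (hT i)

theorem exists_bijective_mapsTo {Γ : Type*} {A : Set Γ} (hA : A.Infinite) (F : Finset Γ) :
    ∃ φ : Γ → Γ, Function.Bijective φ ∧ ∀ i ∈ F, φ i ∈ A := by
  obtain ⟨B, hBA, hB⟩ := hA.exists_subset_card_eq F.card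
  let f : Fin F.card ↪ Γ := F.equivFin.symm.toEmbedding.trans (Function.Embedding.subtype _)
  let g : Fin F.card ↪ Γ :=
    (B.equivFinOfCardEq hB).symm.toEmbedding.trans (Function.Embedding.subtype _)
  -- The symmetric group is `n`-transitive, for infinite `Γ` too.
  have := Equiv.Perm.isMultiplyPretransitive Γ F.card
  obtain ⟨e, he⟩ := MulAction.exists_smul_eq (Equiv.Perm Γ) f g
  refine ⟨e, e.bijective, fun i hi => ?_⟩
  have h := DFunLike.congr_fun he (F.equivFin ⟨i, hi⟩)
  have h' : e i = g (F.equivFin ⟨i, hi⟩) := by simpa [f] using h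
  rw [h']
  exact hBA (Subtype.coe_prop ((B.equivFinOfCardEq hB).symm _))

theorem const_mem_closure_orbit {X Γ : Type*} [TopologicalSpace X] [DiscreteTopology X]
    (p : (Γ → X) × (Γ → X)) (a b : X) (h : {γ | p.1 γ = a ∧ p.2 γ = b}.Infinite) :
    ((fun _ => a, fun _ => b) : (Γ → X) × (Γ → X)) ∈
      closure {q : (Γ → X) × (Γ → X) | ∃ s ∈ shiftGroup X Γ, q = (s p.1, s p.2)} :=
  (mem_closure_orbit_iff _ _).2 fun F => exists_bijective_mapsTo h F

/-- Pigeonhole: for any infinite set `A` of coordinates, a pair of functions into a finite set has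
a value that it takes infinitely often and at some coordinate in `A`. -/
theorem exists_infinite_fiber {X Γ : Type*} [Finite X] (p : (Γ → X) × (Γ → X)) {A : Set Γ}
    (hA : A.Infinite) :
    ∃ a b : X, {γ | p.1 γ = a ∧ p.2 γ = b}.Infinite ∧ ∃ γ ∈ A, p.1 γ = a ∧ p.2 γ = b := by
  have := hA.to_subtype
  obtain ⟨c, hc⟩ := Finite.exists_infinite_fiber fun γ : A => (p.1 γ, p.2 γ)
  have hc' := (Set.infinite_coe_iff.1 hc)
  obtain ⟨γ, hγ⟩ := hc'.nonempty
  refine ⟨c.1, c.2, (hc'.image Subtype.val_injective.injOn).mono ?_, γ, γ.2, ?_⟩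
  · rintro _ ⟨δ, rfl, rfl⟩
    exact ⟨rfl, rfl⟩
  · rw [← show (p.1 γ, p.2 γ) = c from hγ]
    exact ⟨rfl, rfl⟩

theorem mem_proxRel_iff {X Γ : Type*} [TopologicalSpace X] [DiscreteTopology X] [Finite X]
    [Infinite Γ] (p : (Γ → X) × (Γ → X)) :
    p ∈ proxRel (shiftGroup X Γ) ↔ {γ | p.1 γ = p.2 γ}.Infinite := by
  classical
  constructor
  · rintro ⟨z, hz⟩ hfin
    obtain ⟨F, hF⟩ := Infinite.exists_subset_card_eq Γ (hfin.toFinset.card + 1)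
    obtain ⟨φ, hφ, h⟩ := (mem_closure_orbit_iff _ _).1 hz F
    have hle : F.card ≤ hfin.toFinset.card :=
      Finset.card_le_card_of_injOn φ
        (fun i hi => by simpa using (h i hi).1.trans (h i hi).2.symm) hφ.1.injOn
    omega
  · intro hA
    obtain ⟨a, b, hab, γ, hγ, rfl, rfl⟩ := exists_infinite_fiber p hA
    refine ⟨fun _ => p.1 γ, ?_⟩
    have := const_mem_closure_orbit p _ _ hab
    rwa [← show p.1 γ = p.2 γ from hγ] at this

/-- `L(ℋ, 𝒳)` consists exactly of the pairs differing at only finitely many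
coordinates when `Γ` is infinite, and is the diagonal when `Γ` is finite. -/
theorem synProxRel_shiftGroup_eq (X Γ : Type*) [TopologicalSpace X] [DiscreteTopology X]
    [Finite X] [Nontrivial X] [Nonempty Γ] :
    (Infinite Γ → synProxRel (shiftGroup X Γ) =
        {p : (Γ → X) × (Γ → X) | {γ : Γ | p.1 γ ≠ p.2 γ}.Finite}) ∧
      (Finite Γ → synProxRel (shiftGroup X Γ) = Set.diagonal (Γ → X)) := by
  constructor
  · intro _
    ext p
    constructor
    · intro hp
      by_contra hinf
      obtain ⟨a, b, hab, γ, hγ, rfl, rfl⟩ := exists_infinite_fiber p hinf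
      have h := (mem_proxRel_iff _).1 (hp (const_mem_closure_orbit p _ _ hab))
      obtain ⟨_, hδ⟩ := h.nonempty
      exact hγ hδ
    · intro hfin w hw
      replace hfin : {γ : Γ | p.1 γ ≠ p.2 γ}.Finite := hfin
      rw [mem_proxRel_iff]
      have hD : {γ | w.1 γ ≠ w.2 γ}.Finite := by
        by_contra hinf
        obtain ⟨F, hFD, hF⟩ :=
          Set.Infinite.exists_subset_card_eq hinf (hfin.toFinset.card + 1)
        obtain ⟨φ, hφ, h⟩ := (mem_closure_orbit_iff _ _).1 hw F
        have hle : F.card ≤ hfin.toFinset.card := by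
          refine Finset.card_le_card_of_injOn φ (fun i hi => ?_) hφ.1.injOn
          have hi' : w.1 i ≠ w.2 i := hFD hi
          rw [← (h i hi).1, ← (h i hi).2] at hi'
          simpa using hi'
        omega
      have := hD.infinite_compl
      simpa [Set.compl_def] using this
  · intro _
    have := Fintype.ofFinite Γ
    have self_mem : ∀ p : (Γ → X) × (Γ → X),
        p ∈ closure {q : (Γ → X) × (Γ → X) | ∃ s ∈ shiftGroup X Γ, q = (s p.1, s p.2)} :=
      fun p => (mem_closure_orbit_iff _ _).2 fun _ =>
        ⟨id, Function.bijective_id, fun _ _ => ⟨rfl, rfl⟩⟩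
    ext ⟨x, y⟩
    constructor
    · intro hp
      obtain ⟨z, hz⟩ := hp (self_mem _)
      obtain ⟨φ, hφ, h⟩ := (mem_closure_orbit_iff _ _).1 hz Finset.univ
      refine funext fun γ => ?_
      obtain ⟨i, rfl⟩ := hφ.2 γ
      exact (h i (Finset.mem_univ i)).1.trans (h i (Finset.mem_univ i)).2.symm
    · intro hxy
      obtain rfl : x = y := hxy
      rintro ⟨u, v⟩ hw
      obtain ⟨φ, -, h⟩ := (mem_closure_orbit_iff _ _).1 hw Finset.univ
      have huv : u = v := funext fun i =>
        (h i (Finset.mem_univ i)).1.symm.trans (h i (Finset.mem_univ i)).2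
      subst huv
      exact ⟨u, self_mem _⟩
end
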